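/- Let φ_ε be a solution of the nonlinear eigenvalue problem (EV_ε), and set ā_ε = (ε a*_ε / 2)^{1/2}. Then there exists 0 < γ < 1 such that, for every m ∈ εℤⁿ ∩ Ω, the oscillation of φ_ε over the sphere ∂B_{ā_ε}(m) is o(ε^γ). -/

import Mathlib

open Set Filter Metric MeasureTheory Topology Asymptotics

noncomputable section

/-- Euclidean space ℝⁿ. -/
abbrev Eucl (n : ℕ) := EuclideanSpace ℝ (Fin n)

/-- The points of the lattice `εℤⁿ`. -/
def latticePts (n : ℕ) (ε : ℝ) : Set (Eucl n) :=
  {m | ∀ i, ∃ z : ℤ, m i = ε * (z : ℝ)}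

/-- The union of closed balls of radius `a` centered at the lattice points `εℤⁿ`
(the periodic holes `T_{a_ε}`). -/
def holes (n : ℕ) (ε a : ℝ) : Set (Eucl n) :=
  ⋃ m ∈ latticePts n ε, closedBall m a

/-- The Laplacian of a function on ℝⁿ (sum of its second partial derivatives). -/
def lap {n : ℕ} (u : Eucl n → ℝ) (x : Eucl n) : ℝ :=
  ∑ i, fderiv ℝ (fun y => fderiv ℝ u y (EuclideanSpace.single i 1)) x
    (EuclideanSpace.single i 1)

/-- The harmonic capacity of a compact set, via the Dirichlet energy characterization
(which agrees with the flux of the capacitary potential through the boundary). -/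
def capacity (n : ℕ) (K : Set (Eucl n)) : ℝ :=
  sInf {c | ∃ v : Eucl n → ℝ, ContDiff ℝ (⊤ : ℕ∞) v ∧ HasCompactSupport v ∧
    (∀ x ∈ K, 1 ≤ v x) ∧ c = ∫ x, ‖fderiv ℝ v x‖ ^ 2}

/-- The critical scale `a*_ε = ε^(n/(n-2))` (for `n ≥ 3`). -/
def aStar (n : ℕ) (ε : ℝ) : ℝ := ε ^ ((n : ℝ) / ((n : ℝ) - 2))

/-- A set has smooth boundary: it is the strict sublevel set of a smooth function with
nonvanishing differential on the boundary. -/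
def HasSmoothBoundary {n : ℕ} (Ω : Set (Eucl n)) : Prop :=
  ∃ f : Eucl n → ℝ, ContDiff ℝ (⊤ : ℕ∞) f ∧ Ω = {x | f x < 0} ∧
    ∀ x ∈ frontier Ω, fderiv ℝ f x ≠ 0

/-- The heat operator `H[ψ] = Δψ - ∂_t ψ` applied to a space-time function. -/
def heatOp {n : ℕ} (ψ : Eucl n → ℝ → ℝ) (x : Eucl n) (t : ℝ) : ℝ :=
  lap (fun y => ψ y t) x - deriv (fun s => ψ x s) t

/-- `u` is a viscosity supersolution of `F[u] = 0` on `Q`: whenever a smooth test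
function touches `u` from below at a point of `Q`, the operator evaluated on the test
function is `≤ 0` there. -/
def ViscSupersol {n : ℕ} (F : (Eucl n → ℝ → ℝ) → Eucl n → ℝ → ℝ)
    (Q : Set (Eucl n × ℝ)) (u : Eucl n → ℝ → ℝ) : Prop :=
  ∀ ψ : Eucl n → ℝ → ℝ, ContDiff ℝ (⊤ : ℕ∞) (fun p : Eucl n × ℝ => ψ p.1 p.2) →
    ∀ p ∈ Q, ψ p.1 p.2 = u p.1 p.2 → (∀ᶠ q in 𝓝[Q] p, ψ q.1 q.2 ≤ u q.1 q.2) →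
      F ψ p.1 p.2 ≤ 0

/-- `u` is a viscosity subsolution of `F[u] = 0` on `Q`. -/
def ViscSubsol {n : ℕ} (F : (Eucl n → ℝ → ℝ) → Eucl n → ℝ → ℝ)
    (Q : Set (Eucl n × ℝ)) (u : Eucl n → ℝ → ℝ) : Prop :=
  ∀ ψ : Eucl n → ℝ → ℝ, ContDiff ℝ (⊤ : ℕ∞) (fun p : Eucl n × ℝ => ψ p.1 p.2) →
    ∀ p ∈ Q, ψ p.1 p.2 = u p.1 p.2 → (∀ᶠ q in 𝓝[Q] p, u q.1 q.2 ≤ ψ q.1 q.2) →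
      0 ≤ F ψ p.1 p.2

/-- The highly oscillating obstacle `φ_ε = φ · χ_{T_{a_ε}}`. -/
def oscObstacle (n : ℕ) (ε a : ℝ) (φ : Eucl n → ℝ → ℝ) : Eucl n → ℝ → ℝ :=
  fun x t => (holes n ε a).indicator (fun y => φ y t) x

/-- `u` is a viscosity supersolution of the heat equation on `Q_T = Ω × (0,T]`, above the
obstacle `obst`, vanishing on the lateral boundary, with initial data `g`. -/
def IsSupersolHeatObstacle {n : ℕ} (Ω : Set (Eucl n)) (T : ℝ)
    (obst : Eucl n → ℝ → ℝ) (g : Eucl n → ℝ) (u : Eucl n → ℝ → ℝ) : Prop :=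
  ViscSupersol heatOp (Ω ×ˢ Ioc 0 T) u ∧
  (∀ x ∈ frontier Ω, ∀ t ∈ Ioc (0:ℝ) T, u x t = 0) ∧
  (∀ x ∈ Ω, ∀ t ∈ Ioc (0:ℝ) T, obst x t ≤ u x t) ∧
  (∀ x ∈ Ω, u x 0 = g x)

/-- `u` is the least viscosity supersolution of the obstacle problem. -/
def IsLeastSupersolHeatObstacle {n : ℕ} (Ω : Set (Eucl n)) (T : ℝ)
    (obst : Eucl n → ℝ → ℝ) (g : Eucl n → ℝ) (u : Eucl n → ℝ → ℝ) : Prop :=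
  IsSupersolHeatObstacle Ω T obst g u ∧
  ∀ v, IsSupersolHeatObstacle Ω T obst g v →
    ∀ x ∈ Ω, ∀ t ∈ Ioc (0:ℝ) T, u x t ≤ v x t

/-- Difference quotient of size `ε` in direction `e`. -/
def dquot {n : ℕ} (ε : ℝ) (e : Eucl n) (f : Eucl n → ℝ) (x : Eucl n) : ℝ :=
  (f (x + ε • e) - f x) / ε

/-- Norm of the discrete gradient `‖Δ^ε_e f(x)‖ = (Σ_i |Δ^ε_{e_i} f(x)|²)^{1/2}`. -/
def dgradNorm {n : ℕ} (ε : ℝ) (f : Eucl n → ℝ) (x : Eucl n) : ℝ :=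
  Real.sqrt (∑ i, (dquot ε (EuclideanSpace.single i 1) f x) ^ 2)

/-- A unit lattice direction `e ∈ ℤⁿ`, `|e| = 1`. -/
def UnitLatticeDir (n : ℕ) (e : Eucl n) : Prop :=
  e ∈ latticePts n 1 ∧ ‖e‖ = 1

/-- The `ε`-periodic corrector : `Δw = k` outside the holes of radius `a`,
`w = 1` on the holes. -/
def IsCorrector (n : ℕ) (ε a k : ℝ) (w : Eucl n → ℝ) : Prop :=
  Continuous w ∧ ContDiffOn ℝ 2 w (holes n ε a)ᶜ ∧
  (∀ x ∉ holes n ε a, lap w x = k) ∧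
  (∀ x ∈ holes n ε a, w x = 1) ∧
  (∀ m ∈ latticePts n ε, ∀ x, w (x + m) = w x)

/-- `liminf_{ε→0} inf_{x} w_ε(x)`, computed in the extended reals. -/
def liminfInf (n : ℕ) (w : ℝ → Eucl n → ℝ) : EReal :=
  Filter.liminf (fun ε => ⨅ x, ((w ε x : ℝ) : EReal)) (𝓝[>] (0:ℝ))

/-- Solution of the nonlinear eigenvalue problem (EV_ε) in the perforated domain
with holes of radius `a`, extended by zero outside `Ω_{a}`. -/
def IsEVSol (n : ℕ) (Ω : Set (Eucl n)) (ε a p : ℝ) (φ : Eucl n → ℝ) : Prop :=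
  ContinuousOn φ (closure Ω) ∧
  ContDiffOn ℝ 2 φ (Ω \ holes n ε a) ∧
  (∀ x ∈ Ω \ holes n ε a, lap φ x + φ x ^ p = 0) ∧
  (∀ x ∈ Ω \ holes n ε a, 0 < φ x) ∧
  (∀ x, x ∉ Ω \ holes n ε a → φ x = 0)

/-- Elliptic viscosity supersolution of `F[u] = 0` on `D`. -/
def ViscSupersolE {n : ℕ} (F : (Eucl n → ℝ) → Eucl n → ℝ) (D : Set (Eucl n))
    (u : Eucl n → ℝ) : Prop :=
  ∀ ψ : Eucl n → ℝ, ContDiff ℝ (⊤ : ℕ∞) ψ → ∀ x ∈ D, ψ x = u x →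
    (∀ᶠ y in 𝓝[D] x, ψ y ≤ u y) → F ψ x ≤ 0

/-- Elliptic viscosity subsolution of `F[u] = 0` on `D`. -/
def ViscSubsolE {n : ℕ} (F : (Eucl n → ℝ) → Eucl n → ℝ) (D : Set (Eucl n))
    (u : Eucl n → ℝ) : Prop :=
  ∀ ψ : Eucl n → ℝ, ContDiff ℝ (⊤ : ℕ∞) ψ → ∀ x ∈ D, ψ x = u x →
    (∀ᶠ y in 𝓝[D] x, u y ≤ ψ y) → 0 ≤ F ψ x

/-- The ε-periodic smooth cutoff `ξ` used for the initial data of (PME_ε). -/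
def PMECutoff (n : ℕ) (ε : ℝ) (ξ : Eucl n → ℝ) : Prop :=
  ContDiff ℝ (⊤ : ℕ∞) ξ ∧ (∀ x, 0 ≤ ξ x ∧ ξ x ≤ 1) ∧
  (∀ x ∈ holes n ε (aStar n ε), ξ x = 0) ∧
  (∀ x ∉ holes n ε (ε ^ (((n : ℝ) - 1) / ((n : ℝ) - 2))), ξ x = 1) ∧
  (∀ x ∈ holes n ε (ε ^ (((n : ℝ) - 1) / ((n : ℝ) - 2))) \ holes n ε (aStar n ε),
    lap ξ x = 0) ∧
  (∀ x, lap ξ x ≤ 0) ∧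
  (∀ i : Fin n, ∀ x, ξ (x + ε • EuclideanSpace.single i 1) = ξ x)

/-- The smooth initial data `g` for (PME_ε): vanishing outside `Ω` and with
nondegenerate gradient on `∂Ω`. -/
def PMEData (n : ℕ) (Ω : Set (Eucl n)) (δ₀ C : ℝ) (g : Eucl n → ℝ) : Prop :=
  ContDiff ℝ (⊤ : ℕ∞) g ∧ HasCompactSupport g ∧ tsupport g ⊆ closure Ω ∧
  ∀ x ∈ frontier Ω, δ₀ < ‖fderiv ℝ g x‖ ∧ ‖fderiv ℝ g x‖ < C

/-- `u` solves the porous medium problem (PME_ε) in the perforated domain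
`Q_{T,a*_ε} = Ω_{a*_ε} × (0,T]`, with lateral boundary value 0 and initial data `gε`. -/
def IsPMESol (n : ℕ) (Ω : Set (Eucl n)) (T ε m : ℝ) (gε : Eucl n → ℝ)
    (u : Eucl n → ℝ → ℝ) : Prop :=
  ContinuousOn (fun pr : Eucl n × ℝ => u pr.1 pr.2)
    (closure (Ω \ holes n ε (aStar n ε)) ×ˢ Icc 0 T) ∧
  (∀ x ∈ Ω \ holes n ε (aStar n ε), ∀ t ∈ Ioc (0:ℝ) T,
    lap (fun y => u y t ^ m) x - deriv (fun s => u x s) t = 0) ∧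
  (∀ x ∈ frontier (Ω \ holes n ε (aStar n ε)), ∀ t ∈ Ioc (0:ℝ) T, u x t = 0) ∧
  (∀ x ∈ Ω \ holes n ε (aStar n ε), u x 0 = gε x)

def d2 {n : ℕ} (u : Eucl n → ℝ) (x v : Eucl n) : ℝ :=
  deriv (deriv (fun t : ℝ => u (x + t • v))) 0

lemma line_contDiffAt {n : ℕ} {u : Eucl n → ℝ} {x : Eucl n} (v : Eucl n)
    (hu : ContDiffAt ℝ 2 u x) : ContDiffAt ℝ 2 (fun t : ℝ => u (x + t • v)) 0 := by
  have h1 : ContDiffAt ℝ 2 (fun t : ℝ => x + t • v) 0 := by fun_prop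
  have h2 : ContDiffAt ℝ 2 u ((fun t : ℝ => x + t • v) 0) := by simpa using hu
  exact h2.comp (0 : ℝ) h1

lemma d2_eq {n : ℕ} {u : Eucl n → ℝ} {x : Eucl n} (v : Eucl n)
    (hu : ContDiffAt ℝ 2 u x) : d2 u x v = fderiv ℝ (fderiv ℝ u) x v v := by
  unfold d2
  have hl : ∀ t : ℝ, HasDerivAt (fun t : ℝ => x + t • v) v t := by
    intro t
    have := ((hasDerivAt_id t).smul_const v).const_add x
    simpa using this
  have hev : ∀ᶠ y in 𝓝 x, DifferentiableAt ℝ u y := by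
    filter_upwards [hu.eventually (by simp)] with y hy
    exact hy.differentiableAt (by simp)
  have ht : Tendsto (fun t : ℝ => x + t • v) (𝓝 0) (𝓝 x) := by
    have := (hl 0).continuousAt.tendsto
    simpa using this
  have h1 : deriv (fun t : ℝ => u (x + t • v)) =ᶠ[𝓝 0]
      fun t : ℝ => fderiv ℝ u (x + t • v) v := by
    filter_upwards [ht.eventually hev] with t hty
    exact (hty.hasFDerivAt.comp_hasDerivAt t (hl t)).deriv
  rw [h1.deriv_eq]
  have h2 : DifferentiableAt ℝ (fderiv ℝ u) x :=
    (hu.fderiv_right (m := 1) (by norm_num)).differentiableAt (by simp)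
  have h2' : HasFDerivAt (fderiv ℝ u) (fderiv ℝ (fderiv ℝ u) x) (x + (0:ℝ) • v) := by
    simpa using h2.hasFDerivAt
  have h3 := h2'.comp_hasDerivAt (0:ℝ) (hl 0)
  have h4 := h3.clm_apply (hasDerivAt_const (0:ℝ) v)
  simpa using h4.deriv

lemma lap_eq_d2 {n : ℕ} {u : Eucl n → ℝ} {x : Eucl n} (hu : ContDiffAt ℝ 2 u x) :
    lap u x = ∑ i, d2 u x (EuclideanSpace.single i 1) := by
  unfold lap
  refine Finset.sum_congr rfl fun i _ => ?_
  rw [d2_eq _ hu]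
  have h2 : DifferentiableAt ℝ (fderiv ℝ u) x :=
    (hu.fderiv_right (m := 1) (by norm_num)).differentiableAt (by simp)
  rw [fderiv_clm_apply h2 (by fun_prop)]
  simp

lemma lap_eq_basis {n : ℕ} {u : Eucl n → ℝ} {x : Eucl n} (hu : ContDiffAt ℝ 2 u x)
    (b : OrthonormalBasis (Fin n) ℝ (Eucl n)) :
    lap u x = ∑ i, d2 u x (b i) := by
  have key : ∀ b : OrthonormalBasis (Fin n) ℝ (Eucl n), 
      Laplacian.laplacian u x = ∑ i, d2 u x (b i) := by
    intro b
    rw [InnerProductSpace.laplacian_eq_iteratedFDeriv_orthonormalBasis u b]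
    refine Finset.sum_congr rfl fun i _ => ?_
    rw [d2_eq _ hu, iteratedFDeriv_two_apply]
    simp
  rw [lap_eq_d2 hu, ← key b, key (EuclideanSpace.basisFun (Fin n) ℝ)]
  simp

lemma deriv2_nonpos {h : ℝ → ℝ} (hh : ContDiffAt ℝ 2 h 0) (hm : IsLocalMax h 0) :
    deriv (deriv h) 0 ≤ 0 := by
  by_contra! hc
  have h1 := isLocalMin_of_deriv_deriv_pos hc hm.deriv_eq_zero hh.continuousAt
  have h2 : h =ᶠ[𝓝 0] fun _ => h 0 := by
    filter_upwards [h1, hm] with t h1 h2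
    exact le_antisymm h2 h1
  have h3 := h2.deriv.deriv_eq
  simp at h3
  linarith

lemma deriv2_sub {f g : ℝ → ℝ} (hf : ContDiffAt ℝ 2 f 0) (hg : ContDiffAt ℝ 2 g 0) :
    deriv (deriv (fun t => f t - g t)) 0 = deriv (deriv f) 0 - deriv (deriv g) 0 := by
  have h1 : deriv (fun t => f t - g t) =ᶠ[𝓝 0] fun t => deriv f t - deriv g t := by
    filter_upwards [hf.eventually (by simp), hg.eventually (by simp)] with t h1 h2
    exact deriv_fun_sub (h1.differentiableAt (by simp)) (h2.differentiableAt (by simp))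
  rw [h1.deriv_eq]
  have hd : ∀ {f : ℝ → ℝ}, ContDiffAt ℝ 2 f 0 → DifferentiableAt ℝ (deriv f) 0 := by
    intro f hf
    have h2 : DifferentiableAt ℝ (fderiv ℝ f) 0 :=
      (hf.fderiv_right (m := 1) (by norm_num)).differentiableAt (by simp)
    have h3 : deriv f = fun t => fderiv ℝ f t 1 := by
      ext t; simp
    rw [h3]
    exact h2.clm_apply (differentiableAt_const _)
  exact deriv_fun_sub (hd hf) (hd hg)

lemma deriv2_quad (c0 c1 c2 : ℝ) :
    deriv (deriv (fun t : ℝ => c0 + c1 * t + c2 * t ^ 2)) 0 = 2 * c2 := by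
  have h1 : deriv (fun t : ℝ => c0 + c1 * t + c2 * t ^ 2) = fun t => c1 + 2 * c2 * t := by
    ext t
    have h : HasDerivAt (fun t : ℝ => c0 + c1 * t + c2 * t ^ 2)
        (c1 * 1 + c2 * (((2 : ℕ) : ℝ) * t ^ (2 - 1))) t :=
      (((hasDerivAt_id t).const_mul c1).const_add c0).add
        ((hasDerivAt_pow 2 t).const_mul c2)
    rw [h.deriv]
    norm_num
    ring
  rw [h1]
  simp

lemma d2_sub {n : ℕ} {u w : Eucl n → ℝ} {x : Eucl n} (v : Eucl n)
    (hu : ContDiffAt ℝ 2 u x) (hw : ContDiffAt ℝ 2 w x) :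
    d2 (fun y => u y - w y) x v = d2 u x v - d2 w x v :=
  deriv2_sub (line_contDiffAt v hu) (line_contDiffAt v hw)

lemma lap_sub {n : ℕ} {u w : Eucl n → ℝ} {x : Eucl n}
    (hu : ContDiffAt ℝ 2 u x) (hw : ContDiffAt ℝ 2 w x) :
    lap (fun y => u y - w y) x = lap u x - lap w x := by
  rw [lap_eq_d2 (hu.sub hw), lap_eq_d2 hu, lap_eq_d2 hw, ← Finset.sum_sub_distrib]
  exact Finset.sum_congr rfl fun i _ => d2_sub _ hu hw

lemma lap_nonpos {n : ℕ} {u : Eucl n → ℝ} {x : Eucl n}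
    (hu : ContDiffAt ℝ 2 u x) (hm : IsLocalMax u x) : lap u x ≤ 0 := by
  rw [lap_eq_d2 hu]
  refine Finset.sum_nonpos fun i _ => ?_
  refine deriv2_nonpos (line_contDiffAt _ hu) ?_
  have ht : Tendsto (fun t : ℝ => x + t • (EuclideanSpace.single i 1 : Eucl n)) (𝓝 0) (𝓝 x) := by
    have : ContinuousAt (fun t : ℝ => x + t • (EuclideanSpace.single i 1 : Eucl n)) 0 := by
      fun_prop
    simpa using this.tendsto
  have := ht.eventually hm
  filter_upwards [this] with t ht
  simpa using ht

/-- Weak comparison principle. -/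
lemma comparison {n : ℕ} {K : Set (Eucl n)} (hK : IsCompact K) {u w : Eucl n → ℝ}
    (hu : ContinuousOn u K) (hw : ContinuousOn w K)
    (h : ∀ x ∈ K, u x ≤ w x ∨ (K ∈ 𝓝 x ∧ ContDiffAt ℝ 2 u x ∧ ContDiffAt ℝ 2 w x ∧
      lap w x < lap u x)) : ∀ x ∈ K, u x ≤ w x := by
  intro x hx
  obtain ⟨x0, hx0, hmax⟩ := hK.exists_isMaxOn ⟨x, hx⟩ (hu.sub hw)
  have hxx : u x - w x ≤ u x0 - w x0 := hmax hx
  rcases h x0 hx0 with h1 | ⟨h1, h2, h3, h4⟩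
  · linarith
  · have hl : IsLocalMax (fun y => u y - w y) x0 := hmax.isLocalMax h1
    have := lap_nonpos (h2.sub h3) hl
    rw [lap_sub h2 h3] at this
    linarith

/-- Laplacian of a function that is quadratic along lines. -/
lemma lap_quad {n : ℕ} {w : Eucl n → ℝ} {x : Eucl n} (hw : ContDiffAt ℝ 2 w x)
    (c1 c2 : Eucl n → ℝ)
    (h : ∀ v : Eucl n, ∀ t : ℝ, w (x + t • v) = w x + c1 v * t + c2 v * t ^ 2) :
    lap w x = ∑ i, 2 * c2 (EuclideanSpace.single i 1) := by
  rw [lap_eq_d2 hw]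
  refine Finset.sum_congr rfl fun i _ => ?_
  unfold d2
  simp_rw [h]
  exact deriv2_quad _ _ _

lemma lap_isom {n : ℕ} {u : Eucl n → ℝ} {x m : Eucl n} (R : Eucl n ≃ₗᵢ[ℝ] Eucl n)
    (hu : ContDiffAt ℝ 2 u (m + R (x - m))) :
    ContDiffAt ℝ 2 (fun y => u (m + R (y - m))) x ∧
    lap (fun y => u (m + R (y - m))) x = lap u (m + R (x - m)) := by
  have hc : ContDiffAt ℝ 2 (fun y => u (m + R (y - m))) x := by
    have h1 : ContDiffAt ℝ 2 (fun y => m + R (y - m)) x := by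
      have : ContDiff ℝ 2 R := R.contDiff
      fun_prop
    exact hu.comp x h1
  refine ⟨hc, ?_⟩
  rw [lap_eq_d2 hc, lap_eq_basis hu ((EuclideanSpace.basisFun (Fin n) ℝ).map R)]
  refine Finset.sum_congr rfl fun i _ => ?_
  unfold d2
  congr 2
  ext t
  simp only [OrthonormalBasis.map_apply, EuclideanSpace.basisFun_apply]
  rw [add_sub_right_comm, map_add, map_smul, add_assoc]

open scoped Pointwise in
lemma isClosed_holes (n : ℕ) {ε : ℝ} (hε : 0 < ε) (a : ℝ) : IsClosed (holes n ε a) := by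
  have h1 : IsClosed (latticePts n ε) := by
    have : latticePts n ε = ⋂ i, (fun m : Eucl n => ε⁻¹ * m i) ⁻¹' (range ((↑) : ℤ → ℝ)) := by
      ext m
      simp only [latticePts, mem_ofPred_eq, mem_iInter, mem_preimage, mem_range]
      refine forall_congr' fun i => exists_congr fun z => ?_
      rw [eq_inv_mul_iff_mul_eq₀ hε.ne', eq_comm]
    rw [this]
    refine isClosed_iInter fun i => ?_
    exact (Int.isClosedEmbedding_coe_real.isClosed_range).preimage (by fun_prop)
  have h2 : holes n ε a = latticePts n ε + closedBall (0 : Eucl n) a := by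
    ext x
    simp only [holes, mem_iUnion, Set.mem_add, mem_closedBall]
    constructor
    · rintro ⟨m, hm, h⟩
      exact ⟨m, hm, x - m, by simpa [dist_eq_norm] using h, by abel⟩
    · rintro ⟨m, hm, y, hy, rfl⟩
      exact ⟨m, hm, by simpa [dist_eq_norm] using hy⟩
  rw [h2]
  exact h1.add_right_of_isCompact (isCompact_closedBall _ _)

lemma holes_local {n : ℕ} {ε a : ℝ} (hε : 0 < ε) (ha : a < ε / 2) {m : Eucl n}
    (hm : m ∈ latticePts n ε) {x : Eucl n} (hx : dist x m ≤ ε / 2) :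
    x ∈ holes n ε a ↔ dist x m ≤ a := by
  simp only [holes, mem_iUnion, mem_closedBall]
  constructor
  · rintro ⟨m', hm', h⟩
    by_cases hmm : m' = m
    · rwa [hmm] at h
    exfalso
    have : ∃ i, m' i ≠ m i := by
      by_contra! hc
      exact hmm (by ext i; exact hc i)
    obtain ⟨i, hi⟩ := this
    obtain ⟨z, hz⟩ := hm i
    obtain ⟨z', hz'⟩ := hm' i
    have hzz : z' - z ≠ 0 := by
      intro h0
      apply hi
      rw [hz, hz', sub_eq_zero.1 h0]
    have h1 : (1:ℝ) ≤ |((z' - z : ℤ) : ℝ)| := by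
      rw [← Int.cast_abs]
      exact_mod_cast Int.one_le_abs hzz
    have h2 : ε ≤ |(m' - m) i| := by
      have : (m' - m) i = ε * ((z' - z : ℤ) : ℝ) := by
        simp [hz, hz']; ring
      rw [this, abs_mul, abs_of_pos hε]
      nlinarith
    have h3 : |(m' - m) i| ≤ ‖m' - m‖ := by
      simpa using PiLp.norm_apply_le (m' - m) i
    have h4 : dist m' m ≤ dist x m' + dist x m := by
      rw [dist_comm x m']; exact dist_triangle _ _ _
    rw [dist_eq_norm m' m] at h4
    linarith
  · intro h
    exact ⟨m, hm, h⟩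

lemma lap_poly {n : ℕ} (m e x : Eucl n) (α β κ c : ℝ) :
    ContDiffAt ℝ 2 (fun y : Eucl n => α * ‖y - m‖ ^ 2 + β * inner ℝ (y - m) e
      + κ * (inner ℝ (y - m) e) ^ 2 + c) x ∧
    lap (fun y : Eucl n => α * ‖y - m‖ ^ 2 + β * inner ℝ (y - m) e
      + κ * (inner ℝ (y - m) e) ^ 2 + c) x = 2 * n * α + 2 * κ * ‖e‖ ^ 2 := by
  have hc : ContDiffAt ℝ 2 (fun y : Eucl n => α * ‖y - m‖ ^ 2 + β * inner ℝ (y - m) e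
      + κ * (inner ℝ (y - m) e) ^ 2 + c) x := by
    have h1 : ContDiff ℝ 2 (fun y : Eucl n => ‖y - m‖ ^ 2) :=
      (contDiff_id.sub contDiff_const).norm_sq ℝ
    have h2 : ContDiff ℝ 2 (fun y : Eucl n => (inner ℝ (y - m) e : ℝ)) :=
      (contDiff_id.sub contDiff_const).inner ℝ contDiff_const
    apply ContDiff.contDiffAt
    fun_prop
  refine ⟨hc, ?_⟩
  rw [lap_quad hc (fun v => α * (2 * inner ℝ (x - m) v) + β * inner ℝ v e
    + κ * (2 * inner ℝ (x - m) e * inner ℝ v e)) (fun v => α * ‖v‖ ^ 2 + κ * (inner ℝ v e) ^ 2)]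
  · rw [← Finset.mul_sum, Finset.sum_add_distrib, ← Finset.mul_sum, EuclideanSpace.norm_sq_eq e]
    have hi : ∀ i : Fin n, (inner ℝ (EuclideanSpace.single i 1 : Eucl n) e : ℝ) = e i := by
      intro i
      rw [EuclideanSpace.inner_single_left]; simp
    simp only [hi, ← Finset.mul_sum]
    simp
    ring
  · intro v t
    rw [add_sub_right_comm, norm_add_sq_real, inner_add_left, inner_smul_left, inner_smul_right,
      norm_smul]
    simp only [Real.norm_eq_abs, mul_pow, sq_abs, conj_trivial]
    ring

lemma ev_nonneg {n : ℕ} {Ω : Set (Eucl n)} {ε a p : ℝ} {φ : Eucl n → ℝ}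
    (h : IsEVSol n Ω ε a p φ) (x : Eucl n) : 0 ≤ φ x := by
  obtain ⟨-, -, -, h4, h5⟩ := h
  by_cases hx : x ∈ Ω \ holes n ε a
  · exact (h4 x hx).le
  · exact (h5 x hx).ge

lemma ev_contDiffAt {n : ℕ} {Ω : Set (Eucl n)} (hΩ : IsOpen Ω) {ε a p : ℝ} (hε : 0 < ε)
    {φ : Eucl n → ℝ} (h : IsEVSol n Ω ε a p φ) {x : Eucl n} (hx : x ∈ Ω \ holes n ε a) :
    ContDiffAt ℝ 2 φ x :=
  h.2.1.contDiffAt ((hΩ.sdiff (isClosed_holes n hε a)).mem_nhds hx)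

lemma ev_bound {n : ℕ} (hn : 3 ≤ n) {Ω : Set (Eucl n)} (hΩ : IsOpen Ω)
    (hb : Bornology.IsBounded Ω) (hne : Ω.Nonempty) {p : ℝ} (hp0 : 0 < p) (hp1 : p < 1) :
    ∃ M : ℝ, 0 < M ∧ ∀ ε a φ, 0 < ε → IsEVSol n Ω ε a p φ → ∀ x, φ x ≤ M := by
  obtain ⟨R, hR⟩ := hb.closure.subset_closedBall (0 : Eucl n)
  refine ⟨max 1 ((2 * R ^ 2) ^ (1 / (1 - p))), by positivity, ?_⟩
  intro ε a φ hε h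
  have hcomp : IsCompact (closure Ω) := hb.isCompact_closure
  obtain ⟨x0, hx0, hmax⟩ := hcomp.exists_isMaxOn hne.closure h.1
  have hall : ∀ x, φ x ≤ φ x0 := by
    intro x
    by_cases hx : x ∈ Ω \ holes n ε a
    · exact hmax (subset_closure hx.1)
    · rw [h.2.2.2.2 x hx]; exact ev_nonneg h _
  have hN : 0 ≤ φ x0 := ev_nonneg h _
  intro x
  refine (hall x).trans ?_
  by_cases h1 : φ x0 ≤ 1
  · exact h1.trans (le_max_left _ _)
  push Not at h1
  refine le_trans ?_ (le_max_right _ _)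
  set N := φ x0 with hNdef
  have hNp : 0 < N ^ p := Real.rpow_pos_of_pos (by linarith) p
  have key : N ≤ N ^ p * R ^ 2 := by
    have hw := fun x => lap_poly (0 : Eucl n) 0 x (-(N ^ p)) 0 0 (N ^ p * R ^ 2)
    have hnonneg : ∀ x ∈ closure Ω, (0:ℝ) ≤ -(N ^ p) * ‖x - 0‖ ^ 2 + 0 * inner ℝ (x - 0) (0 : Eucl n)
      + 0 * (inner ℝ (x - 0) (0 : Eucl n)) ^ 2 + N ^ p * R ^ 2 := by
      intro x hx
      have := hR hx
      rw [mem_closedBall, dist_eq_norm] at this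
      have h2 : ‖x - 0‖ ^ 2 ≤ R ^ 2 := pow_le_pow_left₀ (norm_nonneg _) this 2
      nlinarith
    have := comparison hcomp h.1
      (fun x _ => (hw x).1.continuousAt.continuousWithinAt) (fun x hx => by
        by_cases hxd : x ∈ Ω \ holes n ε a
        · right
          refine ⟨mem_of_superset (hΩ.mem_nhds hxd.1) subset_closure, ev_contDiffAt hΩ hε h hxd,
            (hw x).1, ?_⟩
          rw [(hw x).2]
          have e1 := h.2.2.1 x hxd
          have e2 : φ x ^ p ≤ N ^ p := Real.rpow_le_rpow (ev_nonneg h x) (hall x) hp0.le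
          have e3 : (3:ℝ) ≤ n := by exact_mod_cast hn
          nlinarith
        · left
          rw [h.2.2.2.2 x hxd]
          exact hnonneg x hx) x0 hx0
    have h5 : 0 ≤ ‖x0 - 0‖ ^ 2 := by positivity
    nlinarith
  have h2 : N ^ (1 - p) ≤ 2 * R ^ 2 := by
    rw [Real.rpow_sub (by linarith), Real.rpow_one, div_le_iff₀ hNp]
    nlinarith [sq_nonneg R]
  calc N = (N ^ (1 - p)) ^ (1 / (1 - p)) := by
        rw [← Real.rpow_mul hN, mul_one_div_cancel (by linarith), Real.rpow_one]
    _ ≤ _ := Real.rpow_le_rpow (by positivity) h2 (by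
        have : 0 < 1 - p := by linarith
        positivity)

lemma lap_barrier {n : ℕ} {f : Eucl n → ℝ} {x : Eucl n} (hf : ContDiffAt ℝ 2 f x) (A K : ℝ) :
    ContDiffAt ℝ 2 (fun y => A * (-f y - K * (f y) ^ 2)) x ∧
    lap (fun y => A * (-f y - K * (f y) ^ 2)) x =
      A * (-(1 + 2 * K * f x) * lap f x
        - 2 * K * ∑ i, (fderiv ℝ f x (EuclideanSpace.single i 1)) ^ 2) := by
  have hc : ContDiffAt ℝ 2 (fun y => A * (-f y - K * (f y) ^ 2)) x := by fun_prop
  refine ⟨hc, ?_⟩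
  rw [lap_eq_d2 hc, lap_eq_d2 hf, Finset.mul_sum, Finset.mul_sum, ← Finset.sum_sub_distrib,
    Finset.mul_sum]
  refine Finset.sum_congr rfl fun i _ => ?_
  set v : Eucl n := EuclideanSpace.single i 1
  unfold d2
  have hl := line_contDiffAt v hf
  set h : ℝ → ℝ := fun t : ℝ => f (x + t • v) with hh
  have h0 : h 0 = f x := by simp [hh]
  have hd0 : deriv h 0 = fderiv ℝ f x v := by
    have e1 : HasDerivAt (fun t : ℝ => x + t • v) v 0 := by
      have := ((hasDerivAt_id (0:ℝ)).smul_const v).const_add x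
      simpa using this
    have e2 : HasFDerivAt f (fderiv ℝ f x) (x + (0:ℝ) • v) := by
      simpa using (hf.differentiableAt (by simp)).hasFDerivAt
    exact (e2.comp_hasDerivAt (0:ℝ) e1).deriv
  have hdd : DifferentiableAt ℝ (deriv h) 0 := by
    have h2 : DifferentiableAt ℝ (fderiv ℝ h) 0 :=
      (hl.fderiv_right (m := 1) (by norm_num)).differentiableAt (by simp)
    have h3 : deriv h = fun t => fderiv ℝ h t 1 := by
      ext t; simp
    rw [h3]
    exact h2.clm_apply (differentiableAt_const _)
  have h1 : deriv (fun t => A * (-h t - K * (h t) ^ 2)) =ᶠ[𝓝 0]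
      fun t => A * (-deriv h t - K * (2 * h t * deriv h t)) := by
    filter_upwards [hl.eventually (by simp)] with t ht
    have e := (ht.differentiableAt (by simp)).hasDerivAt
    have e' := (e.neg.sub ((e.pow 2).const_mul K)).const_mul A
    have e2 := e'.deriv
    simp only [Nat.cast_ofNat, Nat.add_one_sub_one, pow_one] at e2
    exact e2
  change deriv (deriv (fun t => A * (-h t - K * (h t) ^ 2))) 0 = _
  rw [h1.deriv_eq]
  have e := (hl.differentiableAt (by simp)).hasDerivAt
  have e' := (hdd.hasDerivAt.neg.sub (((e.const_mul 2).mul hdd.hasDerivAt).const_mul K)).const_mul A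
  refine e'.deriv.trans ?_
  rw [h0, hd0]
  ring

lemma ev_boundary {n : ℕ} {Ω : Set (Eucl n)} (hΩ : IsOpen Ω)
    (hb : Bornology.IsBounded Ω) (hne : Ω.Nonempty) (hs : HasSmoothBoundary Ω)
    {p : ℝ} (hp0 : 0 < p) {M : ℝ} (hM : 0 < M) :
    ∃ L : ℝ, 0 < L ∧ ∀ ε a φ, 0 < ε → IsEVSol n Ω ε a p φ → (∀ x, φ x ≤ M) →
      ∀ x, ∀ y ∉ Ω, φ x ≤ L * dist x y := by
  obtain ⟨f, hf, hfΩ, hgrad⟩ := hs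
  have hcomp : IsCompact (closure Ω) := hb.isCompact_closure
  have hf2 : ContDiff ℝ 2 f := hf.of_le (by exact WithTop.coe_le_coe.2 le_top)
  have hfc : Continuous f := hf.continuous
  have hmem : ∀ x, x ∈ Ω ↔ f x < 0 := fun x => by rw [hfΩ]; rfl
  have hle : ∀ x ∈ closure Ω, f x ≤ 0 := by
    intro x hx
    have : closure Ω ⊆ {x | f x ≤ 0} :=
      closure_minimal (fun x hx => ((hmem x).1 hx).le) (isClosed_le hfc continuous_const)
    exact this hx
  have hpart : ∀ i : Fin n, ContDiff ℝ 1 (fun y => fderiv ℝ f y (EuclideanSpace.single i 1)) :=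
    fun i => (hf2.fderiv_right (m := 1) (by norm_num)).clm_apply contDiff_const
  have hlapc : Continuous (lap f) := by
    unfold lap
    refine continuous_finsetSum _ fun i _ => ?_
    exact ((hpart i).continuous_fderiv (by simp)).clm_apply continuous_const
  set G : Eucl n → ℝ := fun x => ∑ i, (fderiv ℝ f x (EuclideanSpace.single i 1)) ^ 2 with hG
  have hGc : Continuous G := by
    refine continuous_finsetSum _ fun i _ => ?_
    exact (hpart i).continuous.pow 2
  have hG0 : ∀ x, 0 ≤ G x := fun x => Finset.sum_nonneg fun i _ => sq_nonneg _
  obtain ⟨B, hB⟩ := hcomp.exists_bound_of_continuousOn hlapc.continuousOn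
  have hB0 : 0 ≤ B := by
    obtain ⟨x, hx⟩ := hne
    exact (norm_nonneg _).trans (hB x (subset_closure hx))
  have hpos : ∀ x ∈ closure Ω, 0 < G x - f x := by
    intro x hx
    by_cases hxo : x ∈ Ω
    · have := (hmem x).1 hxo
      linarith [hG0 x]
    · have hfr : x ∈ frontier Ω := by
        rw [hΩ.frontier_eq]; exact ⟨hx, hxo⟩
      have hlt : 0 < G x := by
        refine lt_of_le_of_ne (hG0 x) fun h0 => hgrad x hfr ?_
        have hz := (Finset.sum_eq_zero_iff_of_nonneg (fun i _ => sq_nonneg _)).1 h0.symm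
        ext v
        have hv : v = ∑ i, v i • (EuclideanSpace.single i 1 : Eucl n) := by
          have := (EuclideanSpace.basisFun (Fin n) ℝ).sum_repr v
          simpa using this.symm
        rw [hv, map_sum]
        simp only [map_smul]
        refine Finset.sum_eq_zero fun i hi => ?_
        have := hz i hi
        rw [pow_eq_zero_iff two_ne_zero] at this
        rw [this]; simp
      linarith [hle x hx]
  obtain ⟨x1, hx1, hmin⟩ := hcomp.exists_isMinOn hne.closure (hGc.sub hfc).continuousOn
  set μ := G x1 - f x1 with hμ
  have hμ0 : 0 < μ := hpos x1 hx1
  have hμm : ∀ x ∈ closure Ω, μ ≤ G x - f x := fun x hx => hmin hx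
  set K := (B + 1) / μ with hK
  have hK0 : 0 < K := by positivity
  set δ := min (μ / 2) (1 / (2 * K)) with hδ
  have hδ0 : 0 < δ := by positivity
  have hδ1 : δ ≤ μ / 2 := min_le_left _ _
  have hδ2 : K * δ ≤ 1 / 2 := by
    have : δ ≤ 1 / (2 * K) := min_le_right _ _
    rw [le_div_iff₀ (by positivity)] at this
    linarith
  have hKμ : K * μ = B + 1 := by rw [hK]; field_simp
  set A := 2 * M / δ + M ^ p + 1 with hA
  have hMp : 0 < M ^ p := Real.rpow_pos_of_pos hM p
  have hA0 : 0 < A := by positivity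
  have hA1 : M ^ p < A := by
    have : 0 < 2 * M / δ := by positivity
    linarith
  have hA2 : 2 * M ≤ A * δ := by
    have : 2 * M / δ ≤ A := by linarith
    rwa [div_le_iff₀ hδ0] at this
  -- Lipschitz
  obtain ⟨R, hR⟩ := hb.subset_closedBall (0 : Eucl n)
  obtain ⟨L0, hL0⟩ := (isCompact_closedBall (0 : Eucl n) (R + 1)).exists_bound_of_continuousOn
    (hf.continuous_fderiv (by simp)).continuousOn
  have hLip : ∀ x ∈ closedBall (0 : Eucl n) (R + 1), ∀ y ∈ closedBall (0 : Eucl n) (R + 1),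
      ‖f y - f x‖ ≤ L0 * ‖y - x‖ := fun x hx y hy =>
    (convex_closedBall (0 : Eucl n) (R + 1)).norm_image_sub_le_of_norm_fderiv_le
      (fun z _ => hf.differentiable (by simp) z) hL0 hx hy
  refine ⟨A * |L0| + M, by positivity, ?_⟩
  intro ε a φ hε h hφM
  have key : ∀ x ∈ Ω, φ x ≤ A * (-f x) := by
    intro x hx
    by_cases hxδ : f x < -δ
    · have := hφM x
      nlinarith
    push Not at hxδ
    have hKc : IsCompact (closure Ω ∩ {x | -δ ≤ f x}) :=
      hcomp.inter_right (isClosed_le continuous_const hfc)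
    have hw := fun x => lap_barrier (x := x) hf2.contDiffAt A K
    have := comparison hKc (h.1.mono inter_subset_left)
      (fun x _ => (hw x).1.continuousAt.continuousWithinAt) (fun y hy => by
        have hy1 : -δ ≤ f y := hy.2
        have hy2 : f y ≤ 0 := hle y hy.1
        have hyK : K * (-f y) ≤ 1 / 2 := le_trans (by gcongr; linarith) hδ2
        by_cases hyd : y ∈ Ω \ holes n ε a
        · by_cases hyδ : f y = -δ
          · left
            refine (hφM y).trans ?_
            rw [hyδ]
            have : A * (- -δ - K * (-δ) ^ 2) = A * δ * (1 - K * δ) := by ring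
            rw [this]
            nlinarith
          · right
            have hlt : -δ < f y := lt_of_le_of_ne hy1 (Ne.symm hyδ)
            refine ⟨?_, ev_contDiffAt hΩ hε h hyd, (hw y).1, ?_⟩
            · refine inter_mem (mem_of_superset (hΩ.mem_nhds hyd.1) subset_closure) ?_
              filter_upwards [hfc.continuousAt.eventually (lt_mem_nhds hlt)] with z hz
              exact hz.le
            · rw [(hw y).2]
              have e1 := h.2.2.1 y hyd
              have e2 : φ y ^ p ≤ M ^ p := Real.rpow_le_rpow (ev_nonneg h y) (hφM y) hp0.le
              have e3 := hB y hy.1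
              rw [Real.norm_eq_abs, abs_le] at e3
              have e4 := hμm y hy.1
              have e5 : μ / 2 ≤ G y := by linarith
              have e6 : -(1 + 2 * K * f y) * lap f y ≤ B := by
                have g1 : 0 ≤ 1 + 2 * K * f y := by linarith
                have g2 : 1 + 2 * K * f y ≤ 1 := by nlinarith
                calc -(1 + 2 * K * f y) * lap f y = (1 + 2 * K * f y) * (-lap f y) := by ring
                  _ ≤ (1 + 2 * K * f y) * B := by gcongr; linarith
                  _ ≤ 1 * B := by gcongr
                  _ = B := one_mul B
              have e7 : B + 1 ≤ 2 * K * G y := by nlinarith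
              have e8 : A * (-(1 + 2 * K * f y) * lap f y - 2 * K * G y) ≤ A * (-1) := by
                gcongr; linarith
              change A * (-(1 + 2 * K * f y) * lap f y - 2 * K * G y) < _
              linarith
        · left
          rw [h.2.2.2.2 y hyd]
          have : A * (-f y - K * (f y) ^ 2) = A * (-f y) * (1 - K * (-f y)) := by ring
          rw [this]
          have : 0 ≤ A * (-f y) := mul_nonneg hA0.le (by linarith)
          exact mul_nonneg this (by linarith)) x ⟨subset_closure hx, hxδ⟩
    refine this.trans ?_
    have : 0 ≤ A * (K * f x ^ 2) := by positivity
    linarith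
  intro x y hy
  have hd : 0 ≤ dist x y := dist_nonneg
  have hAL : 0 ≤ A * |L0| := by positivity
  by_cases hx : x ∈ Ω
  swap
  · rw [h.2.2.2.2 x (fun hh => hx hh.1)]; positivity
  by_cases hxy : dist x y ≤ 1
  · have hx' := hR hx
    rw [mem_closedBall] at hx'
    have hyf : 0 ≤ f y := by
      by_contra! hc; exact hy ((hmem y).2 hc)
    have := hLip x (by rw [mem_closedBall]; linarith) y (by
      rw [mem_closedBall]
      have := dist_triangle y x 0
      rw [dist_comm y x] at this
      linarith)
    rw [Real.norm_eq_abs, ← dist_eq_norm, dist_comm y x] at this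
    have h1 : -f x ≤ |L0| * dist x y := by
      have := le_abs_self (f y - f x)
      have := le_abs_self L0
      nlinarith
    have h2 := key x hx
    have h3 : A * (-f x) ≤ A * (|L0| * dist x y) := by gcongr
    nlinarith
  · push Not at hxy
    have := hφM x
    nlinarith

lemma ev_reflect {n : ℕ} (hn : 3 ≤ n) {Ω : Set (Eucl n)} (hΩ : IsOpen Ω)
    {p : ℝ} (hp0 : 0 < p) {M : ℝ} (hM : 0 < M) {ε a : ℝ} {φ : Eucl n → ℝ} (hε : 0 < ε)
    (h : IsEVSol n Ω ε a p φ) (hφM : ∀ x, φ x ≤ M) {m : Eucl n} {r s : ℝ} (hr : 0 < r)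
    (hs : 0 ≤ s) (hsr : s ≤ r)
    (hball : closedBall m r ⊆ Ω)
    (hhole : ∀ x, dist x m ≤ r → (x ∈ holes n ε a ↔ dist x m ≤ a))
    {p₁ p₂ : Eucl n} (h1 : p₁ ∈ sphere m s) (h2 : p₂ ∈ sphere m s) :
    φ p₁ - φ p₂ ≤ M / r ^ 2 * (s ^ 2 + n * r * s) + (M ^ p + 1) * r ^ 2 := by
  have hMp : 0 < M ^ p := Real.rpow_pos_of_pos hM p
  have hq : 0 < M / r ^ 2 := by positivity
  by_cases hpp : p₁ = p₂
  · rw [hpp, sub_self]; positivity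
  rw [mem_sphere, dist_eq_norm] at h1 h2
  set z := (p₁ - m) - (p₂ - m) with hz
  have hz0 : z ≠ 0 := by
    rw [hz]; intro h0; apply hpp
    simpa [sub_eq_zero] using h0
  have hzn : 0 < ‖z‖ := norm_pos_iff.2 hz0
  set e : Eucl n := ‖z‖⁻¹ • z with he
  have hen : ‖e‖ = 1 := by
    rw [he, norm_smul, norm_inv, norm_norm, inv_mul_cancel₀ hzn.ne']
  set R : Eucl n ≃ₗᵢ[ℝ] Eucl n := (Submodule.span ℝ {z})ᗮ.reflection with hR
  have hR1 : R (p₁ - m) = p₂ - m := Submodule.reflection_sub (h1.trans h2.symm)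
  have hRfix : ∀ y : Eucl n, inner ℝ y e = 0 → R y = y := by
    intro y hy
    refine Submodule.reflection_mem_subspace_eq_self ?_
    rw [Submodule.mem_orthogonal_singleton_iff_inner_left]
    rw [he, inner_smul_right] at hy
    rcases mul_eq_zero.1 hy with h0 | h0
    · exact absurd h0 (inv_ne_zero hzn.ne')
    · exact h0
  have hRd : ∀ y : Eucl n, dist (m + R (y - m)) m = dist y m := by
    intro y
    rw [dist_eq_norm, add_sub_cancel_left, R.norm_map, dist_eq_norm]
  set q := M / r ^ 2 with hqd
  have hqr : q * r ^ 2 = M := by rw [hqd]; field_simp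
  set C := M ^ p + 1 with hC
  have hw := fun x => lap_poly m e x (q - C) (q * n * r) (-(n * q)) (C * r ^ 2)
  have hn3 : (3:ℝ) ≤ n := by exact_mod_cast hn
  have hinner : ∀ y : Eucl n, |inner ℝ (y - m) e| ≤ dist y m := by
    intro y
    have := abs_real_inner_le_norm (y - m) e
    rwa [hen, mul_one, ← dist_eq_norm] at this
  have hKc : IsCompact (closedBall m r ∩ {y | 0 ≤ inner ℝ (y - m) e}) :=
    (isCompact_closedBall m r).inter_right
      (isClosed_le continuous_const (by fun_prop))
  have hRc : Continuous (fun y => m + R (y - m)) := by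
    have : Continuous R := R.continuous
    fun_prop
  have hbc : closedBall m r ⊆ closure Ω := hball.trans subset_closure
  have hucont : ContinuousOn (fun y => φ y - φ (m + R (y - m)))
      (closedBall m r ∩ {y | 0 ≤ inner ℝ (y - m) e}) := by
    refine (h.1.mono (inter_subset_left.trans hbc)).sub ?_
    refine h.1.comp hRc.continuousOn ?_
    intro y hy
    apply hbc
    rw [mem_closedBall, hRd]
    exact hy.1
  have hmain := comparison hKc hucont
    (fun x _ => (hw x).1.continuousAt.continuousWithinAt) (fun y hy => by
      have hy1 : dist y m ≤ r := hy.1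
      have hy2 : 0 ≤ inner ℝ (y - m) e := hy.2
      have hy3 := hinner y
      rw [abs_of_nonneg hy2] at hy3
      have hdn : ‖y - m‖ = dist y m := (dist_eq_norm _ _).symm
      set d := dist y m with hd
      have hd0 : 0 ≤ d := dist_nonneg
      set g : ℝ := inner ℝ (y - m) e with hg
      have hWform : (q - C) * ‖y - m‖ ^ 2 + q * n * r * g + -(n * q) * g ^ 2 + C * r ^ 2
          = q * d ^ 2 + q * n * (g * (r - g)) + C * (r ^ 2 - d ^ 2) := by
        rw [hdn]; ring
      have hggg : 0 ≤ g * (r - g) := mul_nonneg hy2 (by linarith)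
      have hrd : 0 ≤ r ^ 2 - d ^ 2 := by nlinarith
      have hqn : 0 ≤ q * n * (g * (r - g)) := by positivity
      have hCC : 0 ≤ C * (r ^ 2 - d ^ 2) := by positivity
      have hqd2 : 0 ≤ q * d ^ 2 := by positivity
      have hRball : dist (m + R (y - m)) m ≤ r := by rw [hRd]; exact hy1
      by_cases c1 : d ≤ a
      · left
        have z1 : φ y = 0 := h.2.2.2.2 y (fun hh => hh.2 ((hhole y hy1).2 c1))
        have z2 : φ (m + R (y - m)) = 0 := h.2.2.2.2 _
          (fun hh => hh.2 ((hhole _ hRball).2 (by rw [hRd]; exact c1)))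
        simp only [z1, z2, sub_self]
        rw [hWform]
        linarith
      by_cases c2 : d = r
      · left
        have z1 := hφM y
        have z2 := ev_nonneg h (m + R (y - m))
        rw [hWform, c2, hqr]
        have : C * (r ^ 2 - r ^ 2) = 0 := by ring
        linarith
      by_cases c3 : g = 0
      · left
        rw [hWform, hRfix _ c3, add_sub_cancel, sub_self]
        linarith
      right
      have hdr : d < r := lt_of_le_of_ne hy1 c2
      have hgp : 0 < g := lt_of_le_of_ne hy2 (Ne.symm c3)
      have hyd : y ∈ Ω \ holes n ε a := ⟨hball hy.1, fun hh => c1 ((hhole y hy1).1 hh)⟩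
      have hRyd : m + R (y - m) ∈ Ω \ holes n ε a :=
        ⟨hball hRball, fun hh => c1 (by rw [hd, ← hRd]; exact (hhole _ hRball).1 hh)⟩
      have k1 := ev_contDiffAt hΩ hε h hyd
      have k2 := lap_isom R (ev_contDiffAt hΩ hε h hRyd)
      refine ⟨?_, k1.sub k2.1, (hw y).1, ?_⟩
      · refine inter_mem (closedBall_mem_nhds_of_mem (by rw [mem_ball]; exact hdr)) ?_
        have hcont : Continuous fun y : Eucl n => (inner ℝ (y - m) e : ℝ) := by fun_prop
        filter_upwards [hcont.continuousAt.eventually (lt_mem_nhds hgp)] with x hx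
        exact le_of_lt hx
      · rw [lap_sub k1 k2.1, k2.2, (hw y).2, hen]
        have e1 := h.2.2.1 y hyd
        have e1' := h.2.2.1 _ hRyd
        have e2 : φ y ^ p ≤ M ^ p := Real.rpow_le_rpow (ev_nonneg h y) (hφM y) hp0.le
        have e3 : 0 ≤ φ (m + R (y - m)) ^ p := Real.rpow_nonneg (ev_nonneg h _) _
        have e4 : 2 * n * (q - C) + 2 * -(n * q) * 1 ^ 2 = - (2 * n * C) := by ring
        rw [e4]
        nlinarith) p₁ ⟨by rw [mem_closedBall, dist_eq_norm, h1]; exact hsr, by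
      show 0 ≤ inner ℝ (p₁ - m) e
      rw [he, inner_smul_right]
      refine mul_nonneg (by positivity) ?_
      rw [hz, inner_sub_right, real_inner_self_eq_norm_sq]
      have := real_inner_le_norm (p₁ - m) (p₂ - m)
      rw [h1, h2] at this
      rw [h1]; nlinarith⟩
  rw [hR1, add_sub_cancel, h1] at hmain
  have hg := hinner p₁
  rw [dist_eq_norm, h1] at hg
  have hg' := (le_abs_self _).trans hg
  have f1 : q * n * r * inner ℝ (p₁ - m) e ≤ q * n * r * s := by gcongr
  have f2 : 0 ≤ n * q * (inner ℝ (p₁ - m) e) ^ 2 := by positivity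
  have f3 : 0 ≤ C * s ^ 2 := by positivity
  nlinarith

/-- almost flatness on spheres: with ā_ε = (ε a*_ε/2)^{1/2}, there is
0 < γ < 1 such that the oscillation of φ_ε over ∂B_{ā_ε}(m) is o(ε^γ) for every
m ∈ εℤⁿ ∩ Ω. -/
theorem ev_oscillation_sphere
    (n : ℕ) (hn : 3 ≤ n)
    (Ω : Set (Eucl n)) (hΩo : IsOpen Ω) (hΩb : Bornology.IsBounded Ω)
    (hΩc : IsConnected Ω) (hΩs : HasSmoothBoundary Ω)
    (p : ℝ) (hp0 : 0 < p) (hp1 : p < 1)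
    (Φ : ℝ → Eucl n → ℝ)
    (hΦ : ∀ ε ∈ Ioo (0:ℝ) 1, IsEVSol n Ω ε (aStar n ε) p (Φ ε))
    :
    ∃ γ : ℝ, 0 < γ ∧ γ < 1 ∧ ∃ η : ℝ → ℝ,
      η =o[𝓝[>] (0:ℝ)] (fun ε => ε ^ γ) ∧
      ∀ ε ∈ Ioo (0:ℝ) 1, ∀ m ∈ latticePts n ε ∩ Ω,
        ∀ p₁ ∈ sphere m (Real.sqrt (ε * aStar n ε / 2)),
        ∀ p₂ ∈ sphere m (Real.sqrt (ε * aStar n ε / 2)),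
          |Φ ε p₁ - Φ ε p₂| ≤ η ε := by
  have hne : Ω.Nonempty := hΩc.nonempty
  obtain ⟨M, hM, hbd⟩ := ev_bound hn hΩo hΩb hne hp0 hp1
  obtain ⟨L, hL, hbdry⟩ := ev_boundary hΩo hΩb hne hΩs hp0 hM
  have hn3 : (3:ℝ) ≤ n := by exact_mod_cast hn
  have hMp : 0 < M ^ p := Real.rpow_pos_of_pos hM p
  set C : ℝ := M * (4 + 2 * n) + (M ^ p + 1) + L + 2 * M with hC
  refine ⟨1 / (2 * n), by positivity, ?_, fun ε => C * ε ^ (1 / (n:ℝ)), ?_, ?_⟩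
  · rw [div_lt_one (by positivity)]; linarith
  · refine IsLittleO.const_mul_left ?_ C
    have hpos : ∀ᶠ ε : ℝ in 𝓝[>] (0:ℝ), 0 < ε := eventually_mem_nhdsWithin
    refine isLittleO_of_tendsto' ?_ ?_
    · filter_upwards [hpos] with ε hε h0
      exact absurd h0 (Real.rpow_pos_of_pos hε _).ne'
    · have h1 : Tendsto (fun ε : ℝ => ε ^ (1 / (2 * (n:ℝ)))) (𝓝[>] 0) (𝓝 0) := by
        have hc : ContinuousAt (fun ε : ℝ => ε ^ (1 / (2 * (n:ℝ)))) 0 :=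
          Real.continuousAt_rpow_const _ _ (Or.inr (by positivity))
        have := hc.tendsto
        rw [Real.zero_rpow (by positivity)] at this
        exact this.mono_left nhdsWithin_le_nhds
      refine h1.congr' ?_
      filter_upwards [hpos] with ε hε
      rw [← Real.rpow_sub hε]
      congr 1
      field_simp
      norm_num
  · intro ε hε m hm p₁ h1 p₂ h2
    obtain ⟨hε0, hε1⟩ := hε
    have hev := hΦ ε ⟨hε0, hε1⟩
    have hφM := hbd ε _ _ hε0 hev
    have hφ0 := ev_nonneg hev
    set t := ε ^ (1 / (n:ℝ)) with ht
    set s := ε ^ (1 / ((n:ℝ) - 2)) with hs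
    have hs0 : 0 < s := Real.rpow_pos_of_pos hε0 _
    have ht0 : 0 < t := Real.rpow_pos_of_pos hε0 _
    have hst : s ≤ t := by
      refine Real.rpow_le_rpow_of_exponent_ge hε0 hε1.le ?_
      exact one_div_le_one_div_of_le (by linarith) (by linarith)
    have hεt : ε ≤ t := by
      calc ε = ε ^ (1:ℝ) := (Real.rpow_one ε).symm
        _ ≤ t := by
          refine Real.rpow_le_rpow_of_exponent_ge hε0 hε1.le ?_
          rw [div_le_one (by positivity)]; linarith
    have ha : aStar n ε = ε * s ^ 2 := by
      have hn2 : (n:ℝ) - 2 ≠ 0 := by linarith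
      rw [aStar, hs, ← Real.rpow_natCast, ← Real.rpow_mul hε0.le]
      nth_rewrite 2 [← Real.rpow_one ε]
      rw [← Real.rpow_add hε0]
      congr 1
      field_simp
      push_cast
      ring
    have hMn : 0 ≤ M * (4 + 2 * n) := by positivity
    by_cases hs2 : s ^ 2 < 1 / 2
    swap
    · push Not at hs2
      have : 1 / 2 ≤ s := by nlinarith
      have hMt : M ≤ 2 * M * t := by nlinarith
      have hrest : 0 ≤ (M * (4 + 2 * n) + (M ^ p + 1) + L) * t := by positivity
      rw [abs_le]
      constructor <;> nlinarith [hφM p₁, hφM p₂, hφ0 p₁, hφ0 p₂]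
    set b := Real.sqrt (ε * aStar n ε / 2) with hb
    have hb0 : 0 ≤ b := Real.sqrt_nonneg _
    have hb2 : b ^ 2 = ε ^ 2 * s ^ 2 / 2 := by
      rw [hb, Real.sq_sqrt (by rw [ha]; positivity), ha]; ring
    have hbs : b ≤ ε * s := by
      refine (sq_le_sq₀ hb0 (by positivity)).1 ?_
      rw [hb2, mul_pow]
      have : 0 ≤ ε ^ 2 * s ^ 2 := by positivity
      linarith
    have hbε : b ≤ ε / 2 := by
      refine (sq_le_sq₀ hb0 (by positivity)).1 ?_
      rw [hb2]
      have : 0 < ε ^ 2 := by positivity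
      nlinarith
    by_cases hball : closedBall m (ε / 2) ⊆ Ω
    · have haε : aStar n ε < ε / 2 := by rw [ha]; nlinarith
      have hest : M / (ε / 2) ^ 2 * (b ^ 2 + n * (ε / 2) * b) + (M ^ p + 1) * (ε / 2) ^ 2
          ≤ C * t := by
        have e1 : b ^ 2 + n * (ε / 2) * b ≤ (ε / 2) ^ 2 * ((4 + 2 * n) * t) := by
          have : n * (ε / 2) * b ≤ n * (ε / 2) * (ε * s) := by gcongr
          have : s ^ 2 ≤ s := by
            have : s ≤ 1 := by nlinarith
            nlinarith
          calc b ^ 2 + n * (ε / 2) * b ≤ ε ^ 2 * s ^ 2 / 2 + n * (ε / 2) * (ε * s) := by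
                rw [hb2]; linarith
            _ ≤ ε ^ 2 * s + n * (ε / 2) * (ε * s) := by
                have : ε ^ 2 * s ^ 2 ≤ ε ^ 2 * s := by gcongr
                have : 0 ≤ ε ^ 2 * s := by positivity
                linarith
            _ = (ε / 2) ^ 2 * ((4 + 2 * n) * s) := by ring
            _ ≤ _ := by gcongr
        have e2 : M / (ε / 2) ^ 2 * (b ^ 2 + n * (ε / 2) * b) ≤ M * ((4 + 2 * n) * t) := by
          calc M / (ε / 2) ^ 2 * (b ^ 2 + n * (ε / 2) * b)
              ≤ M / (ε / 2) ^ 2 * ((ε / 2) ^ 2 * ((4 + 2 * n) * t)) := by gcongr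
            _ = _ := by field_simp
        have e3 : (ε / 2) ^ 2 ≤ t := by nlinarith
        have e4 : (M ^ p + 1) * (ε / 2) ^ 2 ≤ (M ^ p + 1) * t := by gcongr
        have e5 : 0 ≤ (L + 2 * M) * t := by positivity
        calc _ ≤ M * ((4 + 2 * n) * t) + (M ^ p + 1) * t + (L + 2 * M) * t := by linarith
          _ = C * t := by rw [hC]; ring
      have hh := fun x hx => holes_local (x := x) hε0 haε hm.1 hx
      have r1 := ev_reflect hn hΩo hp0 hM hε0 hev hφM (by positivity) hb0 hbε hball hh h1 h2
      have r2 := ev_reflect hn hΩo hp0 hM hε0 hev hφM (by positivity) hb0 hbε hball hh h2 h1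
      exact abs_sub_le_iff.2 ⟨r1.trans hest, r2.trans hest⟩
    · obtain ⟨y, hy1, hy2⟩ := Set.not_subset.1 hball
      rw [mem_closedBall] at hy1
      have hsm : ∀ q ∈ sphere m b, Φ ε q ≤ L * ε := by
        intro q hq
        rw [mem_sphere] at hq
        refine (hbdry ε _ _ hε0 hev hφM q y hy2).trans ?_
        have := dist_triangle q m y
        rw [dist_comm m y] at this
        gcongr
        linarith
      have hLt : L * ε ≤ C * t := by
        have e1 : L * ε ≤ L * t := by gcongr
        have e2 : 0 ≤ (M * (4 + 2 * n) + (M ^ p + 1) + 2 * M) * t := by positivity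
        rw [hC]
        linarith
      have r1 := hsm p₁ h1
      have r2 := hsm p₂ h2
      exact abs_sub_le_iff.2 ⟨by linarith [hφ0 p₂], by linarith [hφ0 p₁]⟩
end
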